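/- For all integers j ≥ i ≥ 0, l ≥ 0, k ≥ 0 and t ≥ 0, the identity [j−i+k+1]·[l+1 choose k−t] = [l choose k−t]·[j−i+t+1] + [l choose k−t−1]·[j−i+l+t+2] holds in the field ℚ(t) of rational functions. (These are the i+1 equations obtained by comparing coefficients of basis webs in the inductive proof of the rectangular relations of the quantum sl(n) web space, whose solution is a(i,m) = [l choose k−m].) -/

import Mathlib

/-- The quantum integer `[m] = (t^m - t^(-m))/(t - t⁻¹)` in the field `ℚ(t)`. -/
noncomputable def qint (m : ℤ) : RatFunc ℚ :=
  (RatFunc.X ^ m - RatFunc.X ^ (-m)) / (RatFunc.X - RatFunc.X⁻¹)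

/-- The quantum factorial `[m]! = [m][m-1]⋯[2][1]`, with `[0]! = 1`. -/
noncomputable def qfact (m : ℕ) : RatFunc ℚ :=
  ∏ i ∈ Finset.range m, qint (i + 1)

/-- The quantum binomial coefficient `[a choose b] = [a]!/([a-b]![b]!)` when `0 ≤ b ≤ a`,
and `0` when `b < 0` or `b > a`. -/
noncomputable def qbinom (a b : ℤ) : RatFunc ℚ :=
  if 0 ≤ b ∧ b ≤ a then qfact a.toNat / (qfact (a - b).toNat * qfact b.toNat) else 0

/-!
The three products `[N+s][l+1]`, `[l+1-s][N]` and `[s][N+l+1]` of quantum integers satisfy an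
addition formula. Multiplying it by `[l+1 choose s]` and absorbing the factors `[l+1-s]` and `[s]`
into the binomial coefficient gives `[l+1]` times the required identity.
-/

section RatFuncX

variable {K : Type*} [Field K]

theorem ratFunc_X_zpow_ne_one {m : ℤ} (hm : m ≠ 0) : (RatFunc.X : RatFunc K) ^ m ≠ 1 := by
  classical
  intro h
  have hval := congrArg (RatFunc.inftyValuation K) h
  rw [RatFunc.inftyValuation.X_zpow, map_one, WithZero.exp_eq_one] at hval
  exact hm hval

theorem ratFunc_X_zpow_sub_zpow_neg_ne_zero {m : ℤ} (hm : m ≠ 0) :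
    (RatFunc.X : RatFunc K) ^ m - RatFunc.X ^ (-m) ≠ 0 := by
  intro h
  have hdouble : (RatFunc.X : RatFunc K) ^ (m + m) = 1 :=
    calc (RatFunc.X : RatFunc K) ^ (m + m)
      _ = RatFunc.X ^ m * RatFunc.X ^ m := zpow_add₀ RatFunc.X_ne_zero m m
      _ = RatFunc.X ^ (-m) * RatFunc.X ^ m := congrArg (· * RatFunc.X ^ m) (sub_eq_zero.mp h)
      _ = 1 := zpow_neg_mul_zpow_self m RatFunc.X_ne_zero
  exact ratFunc_X_zpow_ne_one (by omega) hdouble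

theorem ratFunc_X_sub_inv_ne_zero : (RatFunc.X : RatFunc K) - RatFunc.X⁻¹ ≠ 0 := by
  simpa only [zpow_one, zpow_neg_one] using
    ratFunc_X_zpow_sub_zpow_neg_ne_zero (K := K) one_ne_zero

end RatFuncX

theorem qint_zero : qint 0 = 0 := by
  simp [qint]

theorem qint_ne_zero {m : ℤ} (hm : m ≠ 0) : qint m ≠ 0 :=
  div_ne_zero (ratFunc_X_zpow_sub_zpow_neg_ne_zero hm) ratFunc_X_sub_inv_ne_zero

theorem qint_add_mul_qint_add (a b c : ℤ) :
    qint (a + c) * qint (b + c) = qint b * qint a + qint c * qint (a + b + c) := by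
  have hX : (RatFunc.X : RatFunc ℚ) ≠ 0 := RatFunc.X_ne_zero
  unfold qint
  simp only [div_mul_div_comm, ← add_div]
  congr 1
  simp only [neg_add, zpow_add₀ hX, zpow_neg]
  field_simp
  ring

theorem qfact_ne_zero (n : ℕ) : qfact n ≠ 0 :=
  Finset.prod_ne_zero_iff.mpr fun i _ => qint_ne_zero (by omega)

theorem qfact_succ (n : ℕ) : qfact (n + 1) = qfact n * qint (n + 1) :=
  Finset.prod_range_succ _ n

theorem qfact_toNat_add_one {m : ℤ} (hm : 0 ≤ m) :
    qfact (m + 1).toNat = qfact m.toNat * qint (m + 1) := by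
  lift m to ℕ using hm
  exact qfact_succ m

theorem qbinom_of_nonneg_of_le {a b : ℤ} (hb : 0 ≤ b) (hba : b ≤ a) :
    qbinom a b = qfact a.toNat / (qfact (a - b).toNat * qfact b.toNat) :=
  if_pos ⟨hb, hba⟩

theorem qbinom_eq_zero {a b : ℤ} (h : b < 0 ∨ a < b) : qbinom a b = 0 :=
  if_neg (by omega)

theorem qbinom_symm (a b : ℤ) : qbinom a (a - b) = qbinom a b := by
  unfold qbinom
  simp only [sub_sub_cancel, sub_nonneg, sub_le_self_iff, and_comm, mul_comm]

theorem qint_sub_mul_qbinom_add_one (a b : ℤ) :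
    qint (a + 1 - b) * qbinom (a + 1) b = qint (a + 1) * qbinom a b := by
  by_cases hmem : 0 ≤ b ∧ b ≤ a
  · obtain ⟨hb, hba⟩ := hmem
    have hab : a + 1 - b = a - b + 1 := by ring
    have hqint : qint (a - b + 1) ≠ 0 := qint_ne_zero (by omega)
    rw [qbinom_of_nonneg_of_le hb (by omega), qbinom_of_nonneg_of_le hb hba, hab,
      qfact_toNat_add_one (hb.trans hba), qfact_toNat_add_one (sub_nonneg.mpr hba)]
    field_simp [qfact_ne_zero]
  · rw [qbinom_eq_zero (a := a) (by omega), mul_zero]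
    obtain rfl | hne := eq_or_ne b (a + 1)
    · rw [sub_self, qint_zero, zero_mul]
    · rw [qbinom_eq_zero (by omega), mul_zero]

theorem qint_mul_qbinom_add_one (a b : ℤ) :
    qint b * qbinom (a + 1) b = qint (a + 1) * qbinom a (b - 1) := by
  have h := qint_sub_mul_qbinom_add_one a (a + 1 - b)
  rwa [sub_sub_cancel, qbinom_symm, ← qbinom_symm a, show a - (a + 1 - b) = b - 1 by ring] at h

theorem rectangular_coefficient_equations_general (N s l : ℤ) (hl : 0 ≤ l) :
    qint (N + s) * qbinom (l + 1) s =
      qbinom l s * qint N + qbinom l (s - 1) * qint (N + l + 1) := by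
  have hadd : qint (N + s) * qint (l + 1) =
      qint (l + 1 - s) * qint N + qint s * qint (N + l + 1) := by
    have h := qint_add_mul_qint_add N (l + 1 - s) s
    rwa [sub_add_cancel, show N + (l + 1 - s) + s = N + l + 1 by ring] at h
  have hqint : qint (l + 1) ≠ 0 := qint_ne_zero (by omega)
  apply mul_left_cancel₀ hqint
  linear_combination qbinom (l + 1) s * hadd + qint N * qint_sub_mul_qbinom_add_one l s
    + qint (N + l + 1) * qint_mul_qbinom_add_one l s

/-- For all integers `j ≥ i ≥ 0`, `l ≥ 0`, `k ≥ 0`, `t ≥ 0`,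
`[j-i+k+1]·[l+1 choose k-t] = [l choose k-t]·[j-i+t+1] + [l choose k-t-1]·[j-i+l+t+2]`
holds in `ℚ(t)`. -/
theorem rectangular_coefficient_equations (i j l k t : ℤ)
    (hji : i ≤ j) (hi : 0 ≤ i) (hl : 0 ≤ l) (hk : 0 ≤ k) (ht : 0 ≤ t) :
    qint (j - i + k + 1) * qbinom (l + 1) (k - t) =
      qbinom l (k - t) * qint (j - i + t + 1) +
        qbinom l (k - t - 1) * qint (j - i + l + t + 2) := by
  have h := rectangular_coefficient_equations_general (j - i + t + 1) (k - t) l hl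
  rwa [show j - i + t + 1 + (k - t) = j - i + k + 1 by ring,
    show j - i + t + 1 + l + 1 = j - i + l + t + 2 by ring] at h
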